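/- arXiv:1205.6530 — 4 statements merged into one kernel-verified Lean document; each statement's English description precedes it below -/
import Mathlib

section
/- Let J and J' be measurable range functions on 𝕋^r. Then M_J = M_{J'} if and only if J(σ) = J'(σ) for a.e. σ ∈ 𝕋^r. -/
open MeasureTheory
open scoped ENNReal NNReal

noncomputable section

/-- The unit cube `[0,1)^r` in `ℝ^r`. -/
def cube (r : ℕ) : Set (Fin r → ℝ) := Set.univ.pi fun _ => Set.Ico (0 : ℝ) 1

/-- Lebesgue measure on the torus `𝕋^r`, identified with the cube `[0,1)^r`. -/
def torusMeasure (r : ℕ) : Measure (Fin r → ℝ) := volume.restrict (cube r)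

theorem aux_measurable {Ω H : Type} [MeasurableSpace Ω] [NormedAddCommGroup H]
    [InnerProductSpace ℂ H] [TopologicalSpace.SeparableSpace H]
    (K : Ω → Submodule ℂ H) (Q : Ω → H →L[ℂ] H)
    (hQ : ∀ σ (u : H), Q σ u ∈ K σ ∧ u - Q σ u ∈ (K σ)ᗮ)
    (hm : ∀ u v : H, Measurable fun σ => (inner ℂ (Q σ u) v : ℂ)) (u : H) :
    StronglyMeasurable fun σ => Q σ u := by
  borelize H
  have : SecondCountableTopology H := UniformSpace.secondCountable_of_separable H
  have hself : ∀ σ, inner ℂ (Q σ u) (Q σ u) = (inner ℂ (Q σ u) u : ℂ) := by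
    intro σ
    have h := (Submodule.mem_orthogonal _ _).1 (hQ σ u).2 _ (hQ σ u).1
    rw [inner_sub_right, sub_eq_zero] at h
    exact h.symm
  have hdist : ∀ w : H, Measurable fun σ => ‖Q σ u - w‖ ^ 2 := by
    intro w
    have : (fun σ => ‖Q σ u - w‖ ^ 2) = fun σ =>
        (inner ℂ (Q σ u) u : ℂ).re - 2 * (inner ℂ (Q σ u) w : ℂ).re + ‖w‖ ^ 2 := by
      funext σ
      rw [@norm_sub_sq ℂ, ← hself σ, @norm_sq_eq_re_inner ℂ _ _ _ _ (Q σ u)]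
      rfl
    rw [this]
    exact ((Complex.measurable_re.comp (hm u u)).sub
      ((Complex.measurable_re.comp (hm u w)).const_mul 2)).add_const _
  have hball : ∀ (w : H) (ε : ℝ), MeasurableSet ((fun σ => Q σ u) ⁻¹' Metric.ball w ε) := by
    intro w ε
    have h1 : Measurable fun σ => ‖Q σ u - w‖ := by
      have := (hdist w).sqrt
      simpa [Real.sqrt_sq] using this
    have : (fun σ => Q σ u) ⁻¹' Metric.ball w ε = {σ | ‖Q σ u - w‖ < ε} := by
      ext σ; simp [dist_eq_norm]
    rw [this]
    exact measurableSet_lt h1 measurable_const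
  refine Measurable.stronglyMeasurable (measurable_of_isOpen fun U hU => ?_)
  have hc : ∀ x : U, ∃ ε > 0, Metric.ball (x : H) ε ⊆ U := fun x =>
    Metric.isOpen_iff.1 hU x x.2
  choose ε hε hεU using hc
  obtain ⟨T, hT, hTU⟩ := TopologicalSpace.isOpen_iUnion_countable
    (fun x : U => Metric.ball (x : H) (ε x)) (fun _ => Metric.isOpen_ball)
  have hUeq : U = ⋃ i ∈ T, Metric.ball (i : H) (ε i) := by
    rw [hTU]
    apply Set.Subset.antisymm
    · intro x hx
      exact Set.mem_iUnion.2 ⟨⟨x, hx⟩, Metric.mem_ball_self (hε _)⟩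
    · exact Set.iUnion_subset hεU
  rw [hUeq, Set.preimage_iUnion₂]
  exact MeasurableSet.biUnion hT fun i _ => hball _ _

theorem aux_le {Ω H : Type} [MeasurableSpace Ω] (μ : Measure Ω) [IsFiniteMeasure μ]
    [NormedAddCommGroup H]
    [InnerProductSpace ℂ H] [TopologicalSpace.SeparableSpace H]
    (K K' : Ω → Submodule ℂ H) (hK' : ∀ σ, IsClosed (K' σ : Set H)) (Q : Ω → H →L[ℂ] H)
    (hQ : ∀ σ (u : H), Q σ u ∈ K σ ∧ u - Q σ u ∈ (K σ)ᗮ)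
    (hm : ∀ u v : H, Measurable fun σ => (inner ℂ (Q σ u) v : ℂ))
    (hsub : {a : Lp H 2 μ | ∀ᵐ σ ∂μ, a σ ∈ K σ} ⊆ {a : Lp H 2 μ | ∀ᵐ σ ∂μ, a σ ∈ K' σ}) :
    ∀ᵐ σ ∂μ, K σ ≤ K' σ := by
  have hu : ∀ u : H, ∀ᵐ σ ∂μ, Q σ u ∈ K' σ := by
    intro u
    have hbd : ∀ σ, ‖Q σ u‖ ≤ ‖u‖ := by
      intro σ
      have h := (Submodule.mem_orthogonal _ _).1 (hQ σ u).2 _ (hQ σ u).1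
      have h2 := norm_add_sq_eq_norm_sq_add_norm_sq_of_inner_eq_zero (𝕜 := ℂ) _ _ h
      rw [add_sub_cancel] at h2
      nlinarith [norm_nonneg u, norm_nonneg (Q σ u), mul_self_nonneg ‖u - Q σ u‖]
    have hLp : MemLp (fun σ => Q σ u) 2 μ :=
      MemLp.of_bound (aux_measurable K Q hQ hm u).aestronglyMeasurable ‖u‖
        (Filter.Eventually.of_forall hbd)
    have hmem : hLp.toLp _ ∈ {a : Lp H 2 μ | ∀ᵐ σ ∂μ, a σ ∈ K σ} := by
      filter_upwards [hLp.coeFn_toLp] with σ hσ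
      rw [hσ]; exact (hQ σ u).1
    have h3 : ∀ᵐ σ ∂μ, hLp.toLp _ σ ∈ K' σ := hsub hmem
    filter_upwards [h3, hLp.coeFn_toLp] with σ h4 hσ
    rwa [hσ] at h4
  have hall : ∀ᵐ σ ∂μ, ∀ n, Q σ (TopologicalSpace.denseSeq H n) ∈ K' σ :=
    ae_all_iff.2 fun n => hu _
  filter_upwards [hall] with σ hσ x hx
  have hx2 : Q σ x = x := by
    have h1 : x - Q σ x ∈ K σ := (K σ).sub_mem hx (hQ σ x).1
    have h := (Submodule.mem_orthogonal _ _).1 (hQ σ x).2 _ h1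
    exact (sub_eq_zero.1 (inner_self_eq_zero.1 h)).symm
  have hd : ∀ y, Q σ y ∈ K' σ := fun y =>
    (TopologicalSpace.denseRange_denseSeq H).induction_on (p := fun y => Q σ y ∈ K' σ) y
      ((hK' σ).preimage (Q σ).continuous) hσ
  rw [← hx2]; exact hd x

/-- For measurable range functions `J, J'` (measurability expressed via families `P, P'` of
orthogonal projections onto the fibers), `M_J = M_{J'}` iff `J(σ) = J'(σ)` for a.e. `σ`. -/
theorem MJ_eq_iff_range_functions_ae_eq (r : ℕ) (hr : 0 < r)
    {H : Type} [NormedAddCommGroup H] [InnerProductSpace ℂ H] [CompleteSpace H]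
    [TopologicalSpace.SeparableSpace H]
    (J J' : (Fin r → ℝ) → Submodule ℂ H)
    (hJcl : ∀ σ, IsClosed (J σ : Set H)) (hJ'cl : ∀ σ, IsClosed (J' σ : Set H))
    (P P' : (Fin r → ℝ) → H →L[ℂ] H)
    (hP : ∀ σ (u : H), P σ u ∈ J σ ∧ u - P σ u ∈ (J σ)ᗮ)
    (hP' : ∀ σ (u : H), P' σ u ∈ J' σ ∧ u - P' σ u ∈ (J' σ)ᗮ)
    (hPmeas : ∀ u v : H, Measurable fun σ => (inner ℂ (P σ u) v : ℂ))
    (hP'meas : ∀ u v : H, Measurable fun σ => (inner ℂ (P' σ u) v : ℂ)) :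
    {a : Lp H 2 (torusMeasure r) | ∀ᵐ σ ∂(torusMeasure r), ⇑a σ ∈ J σ} =
      {a : Lp H 2 (torusMeasure r) | ∀ᵐ σ ∂(torusMeasure r), ⇑a σ ∈ J' σ} ↔
    ∀ᵐ σ ∂(torusMeasure r), J σ = J' σ := by
  have : IsFiniteMeasure (torusMeasure r) := by
    refine ⟨?_⟩
    rw [torusMeasure, Measure.restrict_apply_univ, cube, Real.volume_pi_Ico]
    exact ENNReal.prod_lt_top fun _ _ => ENNReal.ofReal_lt_top
  constructor
  · intro h
    filter_upwards [aux_le _ J J' hJ'cl P hP hPmeas h.subset,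
      aux_le _ J' J hJcl P' hP' hP'meas h.symm.subset] with σ h1 h2
    exact le_antisymm h1 h2
  · intro h
    ext a
    simp only [Set.mem_setOf_eq]
    refine Filter.eventually_congr ?_
    filter_upwards [h] with σ hσ
    rw [hσ]
end
end

section
/- Let M be a closed linear subspace of L²(𝕋^r, H) that is doubly invariant, i.e. e_m·a ∈ M for every a ∈ M and every m ∈ ℤ^r. Then there exists a measurable range function J such that M = M_J, and J is unique up to equality almost everywhere. -/
open MeasureTheory
open scoped ENNReal NNReal

noncomputable section

/-- The character `e_m(σ) = exp(2πi⟨m,σ⟩)` on `𝕋^r`. -/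
def char {r : ℕ} (m : Fin r → ℤ) (σ : Fin r → ℝ) : ℂ :=
  Complex.exp (2 * (Real.pi : ℂ) * Complex.I * ∑ j, (m j : ℂ) * (σ j : ℂ))

/-- The projection of `ℝ^r` to the torus. -/
def toTorus {r : ℕ} (σ : Fin r → ℝ) : UnitAddTorus (Fin r) := fun j => (σ j : UnitAddCircle)

/-- The section of `toTorus` with values in the cube. -/
def repTorus {r : ℕ} (y : UnitAddTorus (Fin r)) : Fin r → ℝ :=
  fun j => (AddCircle.measurableEquivIco (1 : ℝ) 0 (y j) : ℝ)

lemma continuous_toTorus {r : ℕ} : Continuous (toTorus (r := r)) :=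
  continuous_pi fun j => (AddCircle.continuous_mk' (1 : ℝ)).comp (continuous_apply j)

lemma measurable_repTorus {r : ℕ} : Measurable (repTorus (r := r)) :=
  measurable_pi_lambda _ fun j => measurable_subtype_coe.comp
    ((AddCircle.measurableEquivIco (1 : ℝ) 0).measurable.comp (measurable_pi_apply j))

lemma repTorus_toTorus {r : ℕ} {σ : Fin r → ℝ} (h : σ ∈ cube r) : repTorus (toTorus σ) = σ := by
  funext j
  have hj := h j (Set.mem_univ j)
  have : σ j ∈ Set.Ico (0 : ℝ) (0 + 1) := by simpa using hj
  exact AddCircle.equivIco_coe_of_mem (p := (1 : ℝ)) (a := 0) this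

lemma measurableSet_cube (r : ℕ) : MeasurableSet (cube r) :=
  MeasurableSet.univ_pi fun _ => measurableSet_Ico

instance instFiniteTorusMeasure (r : ℕ) : IsFiniteMeasure (torusMeasure r) := by
  refine ⟨?_⟩
  simp [torusMeasure, cube, volume_pi, Measure.pi_pi]

lemma char_eq_mFourier {r : ℕ} (m : Fin r → ℤ) (σ : Fin r → ℝ) :
    char m σ = UnitAddTorus.mFourier m (toTorus σ) := by
  simp only [char, UnitAddTorus.mFourier, toTorus, ContinuousMap.coe_mk, fourier_coe_apply,
    ← Complex.exp_sum, Finset.mul_sum]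
  congr 1
  refine Finset.sum_congr rfl fun j _ => ?_
  push_cast
  ring

lemma integral_continuous_eq_zero {r : ℕ} {f : (Fin r → ℝ) → ℂ}
    (hf : Integrable f (torusMeasure r))
    (h : ∀ m : Fin r → ℤ, ∫ σ, char m σ * f σ ∂(torusMeasure r) = 0)
    (g : C(UnitAddTorus (Fin r), ℂ)) : ∫ σ, g (toTorus σ) * f σ ∂(torusMeasure r) = 0 := by
  have hint : ∀ g : C(UnitAddTorus (Fin r), ℂ),
      Integrable (fun σ => g (toTorus σ) * f σ) (torusMeasure r) := fun g =>
    hf.bdd_mul (c := ‖g‖) (g.continuous.comp continuous_toTorus).aestronglyMeasurable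
      (Filter.Eventually.of_forall fun σ => g.norm_coe_le_norm _)
  let L₀ : C(UnitAddTorus (Fin r), ℂ) →ₗ[ℂ] ℂ :=
    { toFun := fun g => ∫ σ, g (toTorus σ) * f σ ∂(torusMeasure r)
      map_add' := fun a b => by
        simp only [ContinuousMap.add_apply, add_mul]
        exact integral_add (hint a) (hint b)
      map_smul' := fun c a => by
        simp only [ContinuousMap.smul_apply, smul_eq_mul, mul_assoc, RingHom.id_apply]
        exact integral_const_mul _ _ }
  let L : C(UnitAddTorus (Fin r), ℂ) →L[ℂ] ℂ :=
    L₀.mkContinuous (∫ σ, ‖f σ‖ ∂(torusMeasure r)) (by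
      intro g
      change ‖∫ σ, g (toTorus σ) * f σ ∂(torusMeasure r)‖ ≤ _
      rw [mul_comm, ← integral_const_mul]
      refine norm_integral_le_of_norm_le (hf.norm.const_mul _)
        (Filter.Eventually.of_forall fun σ => ?_)
      rw [norm_mul]
      gcongr
      exact g.norm_coe_le_norm _)
  have hker : (Submodule.span ℂ (Set.range (UnitAddTorus.mFourier (d := Fin r)))).topologicalClosure
      ≤ L.ker := by
    refine Submodule.topologicalClosure_minimal _ ?_ L.isClosed_ker
    rw [Submodule.span_le]
    rintro _ ⟨m, rfl⟩
    have := h m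
    simp only [char_eq_mFourier] at this
    exact this
  rw [UnitAddTorus.span_mFourier_closure_eq_top] at hker
  exact hker (Submodule.mem_top (x := g))

lemma fourier_unique {r : ℕ} {f : (Fin r → ℝ) → ℂ} (hfm : StronglyMeasurable f)
    (hf : Integrable f (torusMeasure r))
    (h : ∀ m : Fin r → ℤ, ∫ σ, char m σ * f σ ∂(torusMeasure r) = 0) :
    f =ᵐ[torusMeasure r] 0 := by
  have hφ : Measurable (toTorus (r := r)) := continuous_toTorus.measurable
  have hrep : ∀ᵐ σ ∂(torusMeasure r), repTorus (toTorus σ) = σ := by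
    filter_upwards [ae_restrict_mem (measurableSet_cube r)] with σ hσ using repTorus_toTorus hσ
  have hFm : StronglyMeasurable (fun y : UnitAddTorus (Fin r) => f (repTorus y)) :=
    hfm.comp_measurable measurable_repTorus
  have hFi : Integrable (fun y : UnitAddTorus (Fin r) => f (repTorus y))
      ((torusMeasure r).map toTorus) := by
    rw [integrable_map_measure hFm.aestronglyMeasurable hφ.aemeasurable]
    refine hf.congr ?_
    filter_upwards [hrep] with σ hσ
    simp [hσ]
  have key := ae_eq_zero_of_forall_setIntegral_isClosed_eq_zero hFi (fun K hK => by
    rw [setIntegral_map hK.measurableSet hFm.aestronglyMeasurable hφ.aemeasurable,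
      ← integral_indicator (hφ hK.measurableSet)]
    obtain ⟨δ, -, hδ, hδ0⟩ := exists_seq_strictAnti_tendsto (0 : ℝ)
    let g : ℕ → C(UnitAddTorus (Fin r), ℂ) := fun n =>
      ⟨fun y => ((thickenedIndicator (hδ n) K y : NNReal) : ℂ), by
        have := (thickenedIndicator (hδ n) K).continuous
        have h2 : Continuous fun x : NNReal => ((x : ℝ) : ℂ) := by fun_prop
        exact h2.comp this⟩
    have hlim : Filter.Tendsto (fun n => ∫ σ, g n (toTorus σ) * f σ ∂(torusMeasure r)) Filter.atTop
        (nhds (∫ σ, (toTorus ⁻¹' K).indicator (fun σ => f (repTorus (toTorus σ))) σ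
          ∂(torusMeasure r))) := by
      refine tendsto_integral_of_dominated_convergence (fun σ => ‖f σ‖) (fun n => ?_) hf.norm
        (fun n => Filter.Eventually.of_forall fun σ => ?_) ?_
      · exact (((g n).continuous.comp continuous_toTorus).aestronglyMeasurable).mul
          hfm.aestronglyMeasurable
      · rw [norm_mul]
        refine mul_le_of_le_one_left (norm_nonneg _) ?_
        have := thickenedIndicator_le_one (hδ n) K (toTorus σ)
        change ‖(((thickenedIndicator (hδ n) K (toTorus σ) : NNReal) : ℝ) : ℂ)‖ ≤ 1
        simpa using this
      · filter_upwards [hrep] with σ hσ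
        have h1 := thickenedIndicator_tendsto_indicator_closure hδ hδ0 K
        rw [hK.closure_eq, tendsto_pi_nhds] at h1
        have h2 := h1 (toTorus σ)
        have h3 : Filter.Tendsto (fun n => g n (toTorus σ)) Filter.atTop
            (nhds (((K.indicator (fun _ => (1 : NNReal)) (toTorus σ) : NNReal) : ℝ) : ℂ)) :=
          ((Complex.continuous_ofReal.comp NNReal.continuous_coe).tendsto _).comp h2
        have h4 := h3.mul_const (f σ)
        convert h4 using 2
        by_cases hK' : toTorus σ ∈ K
        · simp [hK', hσ]
        · simp [hK']
    refine tendsto_nhds_unique hlim ?_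
    simp only [integral_continuous_eq_zero hf h]
    exact tendsto_const_nhds)
  have := ae_of_ae_map hφ.aemeasurable key
  filter_upwards [this, hrep] with σ h1 h2
  simpa [h2] using h1

/-- The closed span of the values of a sequence of functions. -/
def fiberJ {X H : Type*} [NormedAddCommGroup H] [InnerProductSpace ℂ H]
    (a : ℕ → X → H) (σ : X) : Submodule ℂ H :=
  (Submodule.span ℂ (Set.range fun n => a n σ)).topologicalClosure

instance instProjFiberJ {X H : Type*} [NormedAddCommGroup H] [InnerProductSpace ℂ H]
    [CompleteSpace H] (a : ℕ → X → H) (σ : X) : (fiberJ a σ).HasOrthogonalProjection := by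
  have : CompleteSpace (fiberJ a σ) :=
    (Submodule.isClosed_topologicalClosure _).completeSpace_coe
  infer_instance

lemma measurable_norm_sub_proj {X H : Type*} [MeasurableSpace X] [NormedAddCommGroup H]
    [InnerProductSpace ℂ H] [CompleteSpace H] (a : ℕ → X → H)
    (ha : ∀ n, StronglyMeasurable (a n)) (u : H) :
    Measurable fun σ => ‖u - (fiberJ a σ).starProjection u‖ := by
  refine measurable_of_Iio fun t => ?_
  have : (fun σ => ‖u - (fiberJ a σ).starProjection u‖) ⁻¹' Set.Iio t =
      ⋃ (n : ℕ), ⋃ (k : ℕ),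
        {σ | ‖u - ∑ i : Fin n, (TopologicalSpace.denseSeq (Fin n → ℂ) k) i • a i σ‖ < t} := by
    ext σ
    simp only [Set.mem_preimage, Set.mem_Iio, Set.mem_iUnion, Set.mem_ofPred_eq]
    constructor
    · intro h
      have hmem : (fiberJ a σ).starProjection u ∈
          closure (Submodule.span ℂ (Set.range fun n => a n σ) : Set H) := by
        rw [← Submodule.topologicalClosure_coe]
        exact Submodule.starProjection_apply_mem _ u
      have hopen : IsOpen {w : H | ‖u - w‖ < t} := isOpen_lt (by fun_prop) continuous_const
      obtain ⟨w, hw1, hw2⟩ := mem_closure_iff.1 hmem _ hopen h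
      obtain ⟨c, rfl⟩ := (Finsupp.mem_span_range_iff_exists_finsupp).1 hw2
      obtain ⟨n, hn⟩ := c.support.exists_nat_subset_range
      have hc : (c.sum fun i x => x • a i σ) = ∑ i : Fin n, c i • a i σ := by
        rw [Finsupp.sum_of_support_subset c hn _ (by simp), Finset.sum_range]
      let G : (Fin n → ℂ) → H := fun x => ∑ i : Fin n, x i • a i σ
      have hG : Continuous G := by fun_prop
      obtain ⟨k, hk⟩ := (TopologicalSpace.denseRange_denseSeq (Fin n → ℂ)).exists_mem_open
        (hopen.preimage hG) ⟨fun i => c i, by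
          simp only [Set.mem_preimage, Set.mem_ofPred_eq, G]
          rw [← hc]
          exact hw1⟩
      exact ⟨n, k, hk⟩
    · rintro ⟨n, k, h⟩
      refine lt_of_le_of_lt ?_ h
      rw [Submodule.starProjection_minimal]
      have hm : ∑ i : Fin n, (TopologicalSpace.denseSeq (Fin n → ℂ) k) i • a i σ ∈ fiberJ a σ := by
        refine Submodule.le_topologicalClosure _ (Submodule.sum_mem _ fun i _ =>
          Submodule.smul_mem _ _ (Submodule.subset_span ⟨i, rfl⟩))
      exact ciInf_le ⟨0, by rintro _ ⟨x, rfl⟩; exact norm_nonneg _⟩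
        (⟨_, hm⟩ : fiberJ a σ)
  rw [this]
  refine MeasurableSet.iUnion fun n => MeasurableSet.iUnion fun k => ?_
  have hs : StronglyMeasurable fun σ =>
      u - ∑ i : Fin n, (TopologicalSpace.denseSeq (Fin n → ℂ) k) i • a i σ := by
    refine stronglyMeasurable_const.sub ?_
    exact Finset.stronglyMeasurable_fun_sum _ fun i _ => (ha i).const_smul _
  exact measurableSet_lt hs.norm.measurable measurable_const

lemma measurable_inner_proj {X H : Type*} [MeasurableSpace X] [NormedAddCommGroup H]
    [InnerProductSpace ℂ H] [CompleteSpace H] (a : ℕ → X → H)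
    (ha : ∀ n, StronglyMeasurable (a n)) (u v : H) :
    Measurable fun σ => (inner ℂ ((fiberJ a σ).starProjection u) v : ℂ) := by
  have hq : ∀ u : H, Measurable fun σ => (inner ℂ ((fiberJ a σ).starProjection u) u : ℂ) := by
    intro u
    have : ∀ σ, (inner ℂ ((fiberJ a σ).starProjection u) u : ℂ) =
        ((‖u‖ ^ 2 - ‖u - (fiberJ a σ).starProjection u‖ ^ 2 : ℝ) : ℂ) := by
      intro σ
      set p := (fiberJ a σ).starProjection u with hp
      have h0 : (inner ℂ p (u - p) : ℂ) = 0 :=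
        Submodule.inner_right_of_mem_orthogonal (Submodule.starProjection_apply_mem _ u)
          (Submodule.sub_starProjection_mem_orthogonal u)
      have h1 : (inner ℂ p u : ℂ) = inner ℂ p p := by
        rw [inner_sub_right, sub_eq_zero] at h0
        exact h0
      have h2 : ‖u‖ * ‖u‖ = ‖p‖ * ‖p‖ + ‖u - p‖ * ‖u - p‖ := by
        have := norm_add_sq_eq_norm_sq_add_norm_sq_of_inner_eq_zero p (u - p) h0
        simpa using this
      rw [h1, inner_self_eq_norm_sq_to_K]
      have h3 : ‖p‖ ^ 2 = ‖u‖ ^ 2 - ‖u - p‖ ^ 2 := by nlinarith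
      rw [← h3]
      push_cast
      rfl
    simp only [this]
    exact Complex.measurable_ofReal.comp
      (measurable_const.sub ((measurable_norm_sub_proj a ha u).pow_const 2))
  have := fun σ => inner_map_polarization
    ((fiberJ a σ).starProjection : H →L[ℂ] H).toLinearMap v u
  simp only [ContinuousLinearMap.coe_coe] at this
  simp only [this]
  exact ((((hq _).sub (hq _)).add ((hq _).const_mul _)).sub ((hq _).const_mul _)).div_const _

/-- Weak measurability plus measurability of the norm gives strong measurability. -/
lemma stronglyMeasurable_of_weak {X H : Type*} [MeasurableSpace X] [NormedAddCommGroup H]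
    [InnerProductSpace ℂ H] [TopologicalSpace.SeparableSpace H] (f : X → H)
    (hn : Measurable fun σ => ‖f σ‖) (hw : ∀ v, Measurable fun σ => (inner ℂ (f σ) v : ℂ)) :
    StronglyMeasurable f := by
  borelize H
  have : SecondCountableTopology H := UniformSpace.secondCountable_of_separable H
  refine Measurable.stronglyMeasurable ?_
  have hb : ∀ v, Measurable fun σ => ‖f σ - v‖ := by
    intro v
    have : ∀ σ, ‖f σ - v‖ = Real.sqrt (‖f σ‖ ^ 2 - 2 * (inner ℂ (f σ) v : ℂ).re + ‖v‖ ^ 2) := by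
      intro σ
      have h := norm_sub_sq (𝕜 := ℂ) (f σ) v
      rw [RCLike.re_to_complex] at h
      rw [← h, Real.sqrt_sq (norm_nonneg _)]
    simp only [this]
    exact ((((hn.pow_const 2).sub ((Complex.measurable_re.comp (hw v)).const_mul 2)).add_const _)).sqrt
  refine measurable_of_isOpen fun U hU => ?_
  have : f ⁻¹' U = ⋃ (k : ℕ), ⋃ (q : ℚ),
      ⋃ (_ : Metric.ball (TopologicalSpace.denseSeq H k) q ⊆ U),
        {σ | ‖f σ - TopologicalSpace.denseSeq H k‖ < q} := by
    ext σ
    simp only [Set.mem_preimage, Set.mem_iUnion, Set.mem_ofPred_eq, exists_prop]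
    constructor
    · intro h
      obtain ⟨ε, hε, hsub⟩ := Metric.isOpen_iff.1 hU _ h
      obtain ⟨q, hq0, hq⟩ := exists_rat_btwn (half_pos hε)
      obtain ⟨k, hk⟩ := (TopologicalSpace.denseRange_denseSeq H).exists_dist_lt (f σ) hq0
      refine ⟨k, q, fun x hx => hsub ?_, by rwa [← dist_eq_norm]⟩
      rw [Metric.mem_ball] at hx ⊢
      have := dist_triangle x (TopologicalSpace.denseSeq H k) (f σ)
      rw [dist_comm] at hk
      linarith
    · rintro ⟨k, q, hsub, h⟩
      exact hsub (by rwa [Metric.mem_ball, dist_eq_norm])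
  rw [this]
  exact MeasurableSet.iUnion fun k => MeasurableSet.iUnion fun q => MeasurableSet.iUnion fun _ =>
    measurableSet_lt (hb _) measurable_const

/-- **Helson's theorem.** A closed, doubly invariant subspace `M` of `L²(𝕋^r, H)` is of the
form `M_J` for a measurable range function `J` (measurability expressed by a measurable family
`P` of orthogonal projections onto the fibers), unique up to equality almost everywhere. -/
theorem doubly_invariant_eq_MJ (r : ℕ) (hr : 0 < r)
    {H : Type} [NormedAddCommGroup H] [InnerProductSpace ℂ H] [CompleteSpace H]
    [TopologicalSpace.SeparableSpace H]
    (M : Submodule ℂ (Lp H 2 (torusMeasure r)))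
    (hMcl : IsClosed (M : Set (Lp H 2 (torusMeasure r))))
    (hMinv : ∀ a ∈ M, ∀ m : Fin r → ℤ,
      ∃ b ∈ M, ⇑b =ᵐ[torusMeasure r] fun σ => char m σ • ⇑a σ) :
    ∃ J : (Fin r → ℝ) → Submodule ℂ H,
      (∀ σ, IsClosed (J σ : Set H)) ∧
      (∃ P : (Fin r → ℝ) → H →L[ℂ] H,
        (∀ σ (u : H), P σ u ∈ J σ ∧ u - P σ u ∈ (J σ)ᗮ) ∧
        ∀ u v : H, Measurable fun σ => (inner ℂ (P σ u) v : ℂ)) ∧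
      (M : Set (Lp H 2 (torusMeasure r))) =
        {a : Lp H 2 (torusMeasure r) | ∀ᵐ σ ∂(torusMeasure r), ⇑a σ ∈ J σ} ∧
      (∀ J' : (Fin r → ℝ) → Submodule ℂ H,
        (∀ σ, IsClosed (J' σ : Set H)) →
        (∃ P' : (Fin r → ℝ) → H →L[ℂ] H,
          (∀ σ (u : H), P' σ u ∈ J' σ ∧ u - P' σ u ∈ (J' σ)ᗮ) ∧
          ∀ u v : H, Measurable fun σ => (inner ℂ (P' σ u) v : ℂ)) →
        (M : Set (Lp H 2 (torusMeasure r))) =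
          {a : Lp H 2 (torusMeasure r) | ∀ᵐ σ ∂(torusMeasure r), ⇑a σ ∈ J' σ} →
        ∀ᵐ σ ∂(torusMeasure r), J σ = J' σ) := by
  classical
  have hsep : SecondCountableTopology (Lp H 2 (torusMeasure r)) := by
    haveI : Fact ((2 : ℝ≥0∞) ≠ ∞) := ⟨by simp⟩
    infer_instance
  let a : ℕ → Lp H 2 (torusMeasure r) := fun n => (TopologicalSpace.denseSeq M n : M)
  have haM : ∀ n, a n ∈ M := fun n => (TopologicalSpace.denseSeq M n).2
  let a' : ℕ → (Fin r → ℝ) → H := fun n => ⇑(a n)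
  have ha' : ∀ n, StronglyMeasurable (a' n) := fun n => Lp.stronglyMeasurable (a n)
  have hcl : ∀ σ, IsClosed (fiberJ a' σ : Set H) := fun σ =>
    Submodule.isClosed_topologicalClosure _
  have ha'J : ∀ n σ, a' n σ ∈ fiberJ a' σ := fun n σ =>
    Submodule.le_topologicalClosure _ (Submodule.subset_span ⟨n, rfl⟩)
  have hJle : ∀ (σ : Fin r → ℝ) (K : Submodule ℂ H), IsClosed (K : Set H) →
      (∀ n, a' n σ ∈ K) → fiberJ a' σ ≤ K := by
    intro σ K hK h
    refine Submodule.topologicalClosure_minimal _ ?_ hK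
    rw [Submodule.span_le]
    rintro _ ⟨n, rfl⟩
    exact h n
  have hMJ : (M : Set (Lp H 2 (torusMeasure r))) =
      {b : Lp H 2 (torusMeasure r) | ∀ᵐ σ ∂(torusMeasure r), ⇑b σ ∈ fiberJ a' σ} := by
    ext b
    simp only [SetLike.mem_coe, Set.mem_ofPred_eq]
    constructor
    · intro hb
      have hmem : (⟨b, hb⟩ : M) ∈ closure (Set.range (TopologicalSpace.denseSeq M)) :=
        TopologicalSpace.denseRange_denseSeq M _
      obtain ⟨x, hx, hlim⟩ := mem_closure_iff_seq_limit.1 hmem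
      choose k hk using hx
      have hlim2 : Filter.Tendsto (fun n => a (k n)) Filter.atTop (nhds b) := by
        have := (continuous_subtype_val.tendsto _).comp hlim
        refine this.congr fun n => ?_
        simp [a, hk]
      have hmeas := tendstoInMeasure_of_tendsto_Lp hlim2
      obtain ⟨ns, -, hns⟩ := hmeas.exists_seq_tendsto_ae
      filter_upwards [hns] with σ hσ
      exact (hcl σ).mem_of_tendsto hσ (Filter.Eventually.of_forall fun n => ha'J _ σ)
    · intro hb
      haveI : CompleteSpace M := hMcl.completeSpace_coe
      rw [← Submodule.orthogonal_orthogonal M, Submodule.mem_orthogonal]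
      intro c hc
      have hzero : ∀ n, ∀ᵐ σ ∂(torusMeasure r), (inner ℂ (c σ) (a' n σ) : ℂ) = 0 := by
        intro n
        refine fourier_unique ((Lp.stronglyMeasurable c).inner (ha' n))
          (L2.integrable_inner c (a n)) fun m => ?_
        obtain ⟨d, hdM, hd⟩ := hMinv (a n) (haM n) m
        have h0 : (inner ℂ c d : ℂ) = 0 := Submodule.inner_left_of_mem_orthogonal hdM hc
        rw [L2.inner_def] at h0
        rw [← h0]
        refine integral_congr_ae ?_
        filter_upwards [hd] with σ hσ
        rw [hσ, inner_smul_right]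
      rw [L2.inner_def]
      refine integral_eq_zero_of_ae ?_
      filter_upwards [ae_all_iff.2 hzero, hb] with σ h1 h2
      have hle : fiberJ a' σ ≤ (ℂ ∙ (c σ))ᗮ := by
        refine hJle σ _ (Submodule.isClosed_orthogonal _) fun n => ?_
        rw [Submodule.mem_orthogonal_singleton_iff_inner_right]
        exact h1 n
      exact (Submodule.mem_orthogonal_singleton_iff_inner_right).1 (hle h2)
  refine ⟨fiberJ a', hcl, ⟨fun σ => (fiberJ a' σ).starProjection, fun σ u =>
    ⟨Submodule.starProjection_apply_mem _ u, Submodule.sub_starProjection_mem_orthogonal u⟩,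
    fun u v => measurable_inner_proj a' ha' u v⟩, hMJ, ?_⟩
  rintro J' hJ'cl ⟨P', hP', hP'm⟩ hMJ'
  have h1 : ∀ᵐ σ ∂(torusMeasure r), ∀ n, a' n σ ∈ J' σ := by
    refine ae_all_iff.2 fun n => ?_
    have : a n ∈ (M : Set (Lp H 2 (torusMeasure r))) := haM n
    rw [hMJ'] at this
    exact this
  have hself : ∀ σ u, (inner ℂ (P' σ u) u : ℂ) = inner ℂ (P' σ u) (P' σ u) := by
    intro σ u
    have h0 : (inner ℂ (P' σ u) (u - P' σ u) : ℂ) = 0 :=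
      Submodule.inner_right_of_mem_orthogonal (hP' σ u).1 (hP' σ u).2
    rwa [inner_sub_right, sub_eq_zero] at h0
  have hnormsq : ∀ σ u, ‖P' σ u‖ ^ 2 = (inner ℂ (P' σ u) u : ℂ).re := by
    intro σ u
    rw [hself, ← RCLike.re_to_complex, inner_self_eq_norm_sq]
  have hnle : ∀ σ u, ‖P' σ u‖ ≤ ‖u‖ := by
    intro σ u
    have h2 : (inner ℂ (P' σ u) u : ℂ).re ≤ ‖P' σ u‖ * ‖u‖ :=
      (Complex.re_le_norm _).trans (norm_inner_le_norm _ _)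
    rw [← hnormsq] at h2
    by_contra hlt
    push Not at hlt
    nlinarith [norm_nonneg u]
  have hPsm : ∀ u, StronglyMeasurable fun σ => P' σ u := by
    intro u
    refine stronglyMeasurable_of_weak _ ?_ (hP'm u)
    have : ∀ σ, ‖P' σ u‖ = Real.sqrt ((inner ℂ (P' σ u) u : ℂ).re) := by
      intro σ
      rw [← hnormsq, Real.sqrt_sq (norm_nonneg _)]
    simp only [this]
    exact (Complex.measurable_re.comp (hP'm u u)).sqrt
  have h2 : ∀ᵐ σ ∂(torusMeasure r), ∀ k,
      P' σ (TopologicalSpace.denseSeq H k) ∈ fiberJ a' σ := by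
    refine ae_all_iff.2 fun k => ?_
    set u := TopologicalSpace.denseSeq H k
    have hL : MemLp (fun σ => P' σ u) 2 (torusMeasure r) :=
      MemLp.of_bound (hPsm u).aestronglyMeasurable ‖u‖
        (Filter.Eventually.of_forall fun σ => hnle σ u)
    have hco := hL.coeFn_toLp
    have hin : hL.toLp _ ∈ (M : Set (Lp H 2 (torusMeasure r))) := by
      rw [hMJ']
      change ∀ᵐ σ ∂(torusMeasure r), _
      filter_upwards [hco] with σ hσ
      rw [hσ]
      exact (hP' σ u).1
    rw [hMJ] at hin
    have hin' : ∀ᵐ σ ∂(torusMeasure r), (hL.toLp _) σ ∈ fiberJ a' σ := hin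
    filter_upwards [hco, hin'] with σ hσ h3
    rwa [hσ] at h3
  filter_upwards [h1, h2] with σ h3 h4
  refine le_antisymm (hJle σ _ (hJ'cl σ) h3) fun v hv => ?_
  have hfix : P' σ v = v := by
    have hd : v - P' σ v ∈ J' σ := Submodule.sub_mem _ hv (hP' σ v).1
    have h0 : (inner ℂ (v - P' σ v) (v - P' σ v) : ℂ) = 0 :=
      Submodule.inner_right_of_mem_orthogonal hd (hP' σ v).2
    rw [inner_self_eq_zero, sub_eq_zero] at h0
    exact h0.symm
  have hall : ∀ w, P' σ w ∈ fiberJ a' σ := by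
    intro w
    have hc : IsClosed {w : H | P' σ w ∈ fiberJ a' σ} := (hcl σ).preimage (P' σ).continuous
    exact (TopologicalSpace.denseRange_denseSeq H).induction_on w hc h4
  rw [← hfix]
  exact hall v
end
end

section
/- For every f ∈ L²(𝕋^r, H) one has the identity (in [0,∞]): Σ_{i∈I, m∈ℤ^r} |⟨f, f_{i,m}⟩_{L²(𝕋^r,H)}|² = ∫_{𝕋^r} Σ_{i∈I} |⟨f(σ), g_i(σ)⟩_H|² dσ. -/
open MeasureTheory
open scoped ENNReal NNReal

noncomputable section

local instance torusMS : MeasureSpace UnitAddCircle := ⟨AddCircle.haarAddCircle⟩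

local instance torusHaar : Measure.IsAddHaarMeasure (volume : Measure UnitAddCircle) :=
  inferInstanceAs (Measure.IsAddHaarMeasure AddCircle.haarAddCircle)

local instance torusProb : IsProbabilityMeasure (volume : Measure UnitAddCircle) :=
  inferInstanceAs (IsProbabilityMeasure AddCircle.haarAddCircle)

open UnitAddTorus Filter Topology

/-- Uniqueness of Fourier coefficients for `L¹` functions on the torus. -/
lemma ae_zero_of_mFourierCoeff {r : ℕ} (h : UnitAddTorus (Fin r) → ℂ) (hi : Integrable h)
    (h0 : ∀ n, mFourierCoeff h n = 0) : h =ᵐ[volume] 0 := by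
  have hint : ∀ p : C(UnitAddTorus (Fin r), ℂ), Integrable (fun t => p t * h t) := by
    intro p
    exact hi.bdd_mul (c := ‖p‖) p.continuous.aestronglyMeasurable
      (Eventually.of_forall fun t => p.norm_coe_le_norm t)
  have key : ∀ p : C(UnitAddTorus (Fin r), ℂ), ∫ t, p t * h t = 0 := by
    let L : C(UnitAddTorus (Fin r), ℂ) →ₗ[ℂ] ℂ :=
      { toFun := fun p => ∫ t, p t * h t
        map_add' := by
          intro p q
          rw [← integral_add (hint p) (hint q)]
          simp [add_mul]
        map_smul' := by
          intro c p
          simp [mul_assoc, integral_const_mul] }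
    let L' : C(UnitAddTorus (Fin r), ℂ) →L[ℂ] ℂ := L.mkContinuous (∫ t, ‖h t‖) (by
      intro p
      calc ‖∫ t, p t * h t‖ ≤ ∫ t, ‖p‖ * ‖h t‖ := by
            refine norm_integral_le_of_norm_le (hi.norm.const_mul _)
              (Eventually.of_forall fun t => ?_)
            rw [norm_mul]
            gcongr
            exact p.norm_coe_le_norm t
        _ = _ := by rw [integral_const_mul, mul_comm])
    have hker : (Submodule.span ℂ (Set.range (mFourier (d := Fin r)))) ≤ LinearMap.ker L'.toLinearMap := by
      rw [Submodule.span_le]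
      rintro _ ⟨n, rfl⟩
      have := h0 (-n)
      simp only [mFourierCoeff, neg_neg, smul_eq_mul] at this
      exact this
    have hcl := Submodule.topologicalClosure_minimal _ hker L'.isClosed_ker
    rw [span_mFourier_closure_eq_top] at hcl
    intro p
    exact hcl (Submodule.mem_top (x := p))
  refine ae_eq_zero_of_forall_setIntegral_isClosed_eq_zero hi fun s hs => ?_
  have hlim : Tendsto (fun n : ℕ => ∫ t, ((hs.apprSeq n t : ℝ) : ℂ) * h t) atTop
      (𝓝 (∫ t, s.indicator h t)) := by
    refine tendsto_integral_of_dominated_convergence (fun t => ‖h t‖) ?_ hi.norm ?_ ?_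
    · intro n
      refine AEStronglyMeasurable.mul (Continuous.aestronglyMeasurable ?_) hi.1
      have := (hs.apprSeq n).continuous
      fun_prop
    · intro n
      refine Eventually.of_forall fun t => ?_
      rw [norm_mul]
      refine mul_le_of_le_one_left (norm_nonneg _) ?_
      have := HasOuterApproxClosed.apprSeq_apply_le_one hs n t
      simpa using this
    · refine Eventually.of_forall fun t => ?_
      have h1 := tendsto_pi_nhds.1 (HasOuterApproxClosed.tendsto_apprSeq hs) t
      have h2 : Tendsto (fun n => ((hs.apprSeq n t : ℝ) : ℂ)) atTop
          (𝓝 (((s.indicator (fun _ => (1 : ℝ≥0)) t : ℝ≥0) : ℝ) : ℂ)) :=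
        ((Complex.continuous_ofReal.comp NNReal.continuous_coe).tendsto _).comp h1
      have h3 := h2.mul_const (h t)
      convert h3 using 2
      by_cases ht : t ∈ s <;> simp [ht]
  have hz : ∀ n, ∫ t, ((hs.apprSeq n t : ℝ) : ℂ) * h t = 0 := fun n =>
    key ⟨fun t => ((hs.apprSeq n t : ℝ) : ℂ), by
      have := (hs.apprSeq n).continuous
      fun_prop⟩
  simp only [hz] at hlim
  rw [integral_indicator hs.measurableSet] at hlim
  exact (tendsto_nhds_unique hlim tendsto_const_nhds)

lemma parseval_L2 {r : ℕ} (h : Lp ℂ 2 (volume : Measure (UnitAddTorus (Fin r)))) :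
    ∑' n, (‖mFourierCoeff h n‖₊ : ℝ≥0∞) ^ 2 = ∫⁻ t, (‖h t‖₊ : ℝ≥0∞) ^ 2 := by
  have hs := hasSum_sq_mFourierCoeff h
  have hi : Integrable (fun t => ‖h t‖ ^ 2) := (Lp.memLp h).integrable_norm_pow (by simp)
  have e1 := ofReal_integral_eq_lintegral_ofReal hi (Eventually.of_forall fun t => by positivity)
  have e2 := ENNReal.ofReal_tsum_of_nonneg (fun n => by positivity) hs.summable
  rw [hs.tsum_eq, e1] at e2
  have e3 : ∀ z : ℂ, ENNReal.ofReal (‖z‖ ^ 2) = (‖z‖₊ : ℝ≥0∞) ^ 2 := by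
    intro z
    rw [ENNReal.ofReal_pow (norm_nonneg _), ofReal_norm_eq_enorm]
    rfl
  simp only [e3] at e2
  exact e2.symm

lemma parseval_L1 {r : ℕ} (h : UnitAddTorus (Fin r) → ℂ) (hi : Integrable h) :
    ∑' n, (‖mFourierCoeff h n‖₊ : ℝ≥0∞) ^ 2 = ∫⁻ t, (‖h t‖₊ : ℝ≥0∞) ^ 2 := by
  have main : ∀ k : Lp ℂ 2 (volume : Measure (UnitAddTorus (Fin r))), h =ᵐ[volume] k →
      ∑' n, (‖mFourierCoeff h n‖₊ : ℝ≥0∞) ^ 2 = ∫⁻ t, (‖h t‖₊ : ℝ≥0∞) ^ 2 := by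
    intro k hk
    have e1 : mFourierCoeff h = mFourierCoeff k := by
      ext n
      refine integral_congr_ae ?_
      filter_upwards [hk] with t ht
      rw [ht]
    rw [e1, parseval_L2]
    refine lintegral_congr_ae ?_
    filter_upwards [hk] with t ht
    rw [ht]
  by_cases hR : ∫⁻ t, (‖h t‖₊ : ℝ≥0∞) ^ 2 = ∞
  · by_cases hL : ∑' n, (‖mFourierCoeff h n‖₊ : ℝ≥0∞) ^ 2 = ∞
    · rw [hR, hL]
    have hm : Memℓp (fun n => mFourierCoeff h n) 2 := by
      refine memℓp_gen ?_
      have := ENNReal.summable_toReal hL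
      simpa using this
    let k := (mFourierBasis (d := Fin r)).repr.symm ⟨_, hm⟩
    have hk : ∀ n, mFourierCoeff k n = mFourierCoeff h n := by
      intro n
      rw [← mFourierBasis_repr]
      simp [k]
    have hki : Integrable (k : UnitAddTorus (Fin r) → ℂ) := (Lp.memLp k).integrable (by norm_num)
    refine main k ?_
    have hz := ae_zero_of_mFourierCoeff (fun t => h t - k t) (hi.sub hki) (by
      intro n
      have hb : ∀ q : UnitAddTorus (Fin r) → ℂ, Integrable q →
          Integrable (fun t => mFourier (-n) t • q t) := fun q hq =>
        hq.bdd_mul (c := ‖mFourier (-n)‖) (mFourier (-n)).continuous.aestronglyMeasurable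
          (Eventually.of_forall fun t => (mFourier (-n)).norm_coe_le_norm t)
      have := integral_sub (hb h hi) (hb k hki)
      have h2 := hk n
      simp only [mFourierCoeff] at h2 ⊢
      simp only [smul_sub]
      rw [this, h2, sub_self])
    filter_upwards [hz] with t ht
    exact sub_eq_zero.1 ht
  · have hmem : MemLp h 2 volume := by
      refine ⟨hi.1, ?_⟩
      rw [eLpNorm_lt_top_iff_lintegral_rpow_enorm_lt_top (by simp) (by simp)]
      have := lt_top_iff_ne_top.2 hR
      simpa [enorm] using this
    exact main (hmem.toLp h) hmem.coeFn_toLp.symm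

/-- The fundamental-domain map. -/
def phi (r : ℕ) (t : UnitAddTorus (Fin r)) : Fin r → ℝ :=
  (measurableEquivPiIoc (0 : Fin r → ℝ) t).1

lemma measurableSet_Iocs (r : ℕ) : 
    MeasurableSet {x : Fin r → ℝ | ∀ i, x i ∈ Set.Ioc ((0 : Fin r → ℝ) i) ((0 : Fin r → ℝ) i + 1)} :=
  MeasurableSet.univ_pi' (fun i => measurableSet_Ioc)

lemma phi_emb (r : ℕ) : MeasurableEmbedding (phi r) :=
  (MeasurableEmbedding.subtype_coe (measurableSet_Iocs r)).comp
    (measurableEquivPiIoc (0 : Fin r → ℝ)).measurableEmbedding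

lemma phi_mp (r : ℕ) : MeasurePreserving (phi r) volume (torusMeasure r) := by
  refine ⟨(phi_emb r).measurable, ?_⟩
  have h1 := (measurePreserving_equivPiIoc (0 : Fin r → ℝ)).map_eq
  have h2 := Measure.map_map (μ := (volume : Measure (UnitAddTorus (Fin r))))
    (measurable_subtype_coe (p := fun x : Fin r → ℝ => ∀ i, x i ∈ Set.Ioc ((0 : Fin r → ℝ) i) ((0 : Fin r → ℝ) i + 1)))
    (measurableEquivPiIoc (0 : Fin r → ℝ)).measurable
  rw [h1] at h2
  change Measure.map (Subtype.val ∘ (measurableEquivPiIoc (0 : Fin r → ℝ))) volume = _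
  rw [← h2]
  refine (map_comap_subtype_coe (measurableSet_Iocs r) volume).trans ?_
  unfold torusMeasure cube
  refine Measure.restrict_congr_set ?_
  have a1 := Measure.univ_pi_Ioc_ae_eq_Icc (μ := fun _ : Fin r => (volume : Measure ℝ)) (f := 0) (g := 1)
  have a2 := Measure.univ_pi_Ico_ae_eq_Icc (μ := fun _ : Fin r => (volume : Measure ℝ)) (f := 0) (g := 1)
  have a3 := a1.trans a2.symm
  have e : {x : Fin r → ℝ | ∀ i, x i ∈ Set.Ioc ((0 : Fin r → ℝ) i) ((0 : Fin r → ℝ) i + 1)}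
      = Set.univ.pi fun i => Set.Ioc ((0 : Fin r → ℝ) i) ((1 : Fin r → ℝ) i) := by
    ext x; simp
  rw [e]
  exact a3

lemma char_phi {r : ℕ} (n : Fin r → ℤ) (t : UnitAddTorus (Fin r)) :
    char n (phi r t) = mFourier n t := by
  have ht : t = fun i => ((phi r t i : ℝ) : UnitAddCircle) := by
    have := (measurableEquivPiIoc (0 : Fin r → ℝ)).symm_apply_apply t
    rw [coe_symm_measurableEquivPiIoc_apply] at this
    exact this.symm
  conv_rhs => rw [ht]
  simp only [mFourier, ContinuousMap.coe_mk, fourier_coe_apply, char, ← Complex.exp_sum]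
  congr 1
  rw [Finset.mul_sum]
  refine Finset.sum_congr rfl fun i _ => ?_
  push_cast
  ring

lemma parseval_cube {r : ℕ} (h : (Fin r → ℝ) → ℂ) (hi : Integrable h (torusMeasure r)) :
    ∑' n, (‖∫ σ, char n σ * h σ ∂(torusMeasure r)‖₊ : ℝ≥0∞) ^ 2
      = ∫⁻ σ, (‖h σ‖₊ : ℝ≥0∞) ^ 2 ∂(torusMeasure r) := by
  have mp := phi_mp r
  have hi' : Integrable (fun t => h (phi r t)) := mp.integrable_comp_of_integrable hi
  have P := parseval_L1 _ hi'
  rw [mp.lintegral_comp_emb (phi_emb r) (fun σ => (‖h σ‖₊ : ℝ≥0∞) ^ 2)] at P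
  rw [← P, ← (Equiv.neg (Fin r → ℤ)).tsum_eq (fun n => (‖mFourierCoeff _ n‖₊ : ℝ≥0∞) ^ 2)]
  refine tsum_congr fun n => ?_
  congr 3
  rw [← mp.integral_comp (phi_emb r)]
  simp only [mFourierCoeff, Equiv.neg_apply, neg_neg, char_phi, smul_eq_mul]

/-- For every `f ∈ L²(𝕋^r, H)`:
`Σ_{i,m} |⟨f, f_{i,m}⟩|² = ∫_{𝕋^r} Σ_i |⟨f(σ), g_i(σ)⟩|² dσ`, as an identity in `[0,∞]`,
where `f_{i,m}(σ) = e_m(σ) g_i(σ)`. -/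
theorem sum_inner_sq_eq_integral (r : ℕ) (hr : 0 < r)
    {H : Type} [NormedAddCommGroup H] [InnerProductSpace ℂ H] [CompleteSpace H]
    [TopologicalSpace.SeparableSpace H]
    {I : Type} [Countable I]
    (g : I → Lp H 2 (torusMeasure r))
    (f : I × (Fin r → ℤ) → Lp H 2 (torusMeasure r))
    (hf : ∀ (i : I) (m : Fin r → ℤ),
      ⇑(f (i, m)) =ᵐ[torusMeasure r] fun σ => char m σ • ⇑(g i) σ)
    (F : Lp H 2 (torusMeasure r)) :
    ∑' p : I × (Fin r → ℤ), (‖(inner ℂ F (f p) : ℂ)‖₊ : ℝ≥0∞) ^ 2 =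
      ∫⁻ σ, (∑' i : I, (‖(inner ℂ (⇑F σ) (⇑(g i) σ) : ℂ)‖₊ : ℝ≥0∞) ^ 2) ∂(torusMeasure r) := by
  have hin : ∀ i, Integrable (fun σ => (inner ℂ (F σ) (g i σ) : ℂ)) (torusMeasure r) :=
    fun i => L2.integrable_inner F (g i)
  rw [ENNReal.tsum_prod']
  rw [lintegral_tsum fun i => by
    have := (hin i).1.enorm
    exact this.pow_const 2]
  refine tsum_congr fun i => ?_
  rw [← parseval_cube _ (hin i)]
  refine tsum_congr fun m => ?_
  congr 3
  rw [L2.inner_def]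
  refine integral_congr_ae ?_
  filter_upwards [hf i m] with σ hσ
  rw [hσ, inner_smul_right]
end
end

section
/- Let 0 < B < ∞. The family {f_{i,m} : i ∈ I, m ∈ ℤ^r} is a Bessel family for S with constant B if and only if for a.e. σ ∈ 𝕋^r the family {g_i(σ) : i ∈ I} is a Bessel family for J(σ) with the same constant B. -/
open MeasureTheory
open scoped ENNReal NNReal

noncomputable section

theorem lp_sq {α E : Type*} [MeasurableSpace α] {μ : Measure α} [NormedAddCommGroup E]
    (h : Lp E 2 μ) : (‖h‖₊ : ℝ≥0∞) ^ 2 = ∫⁻ σ, ‖h σ‖ₑ ^ 2 ∂μ := by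
  have h1 : (‖h‖₊ : ℝ≥0∞) = eLpNorm h 2 μ := by
    rw [← enorm_eq_nnnorm, Lp.enorm_def]
  have h2 := eLpNorm_nnreal_pow_eq_lintegral (p := 2) (f := h) (μ := μ) (by norm_num)
  rw [h1]
  simpa using h2

section parseval
local instance : MeasureSpace UnitAddCircle := ⟨AddCircle.haarAddCircle⟩

def mk (r : ℕ) : (Fin r → ℝ) → UnitAddTorus (Fin r) := fun σ j => (σ j : UnitAddCircle)

def sect (r : ℕ) : UnitAddTorus (Fin r) → (Fin r → ℝ) :=
  fun t j => (AddCircle.measurableEquivIco (1 : ℝ) 0 (t j) : ℝ)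

theorem char_eq {r : ℕ} (m : Fin r → ℤ) (σ : Fin r → ℝ) :
    UnitAddTorus.mFourier m (mk r σ) = char m σ := by
  simp only [UnitAddTorus.mFourier, char, mk, ContinuousMap.coe_mk, fourier_coe_apply]
  rw [← Complex.exp_sum]
  congr 1
  rw [Finset.mul_sum]
  refine Finset.sum_congr rfl fun j _ => ?_
  push_cast
  ring

theorem mp_mk (r : ℕ) : MeasurePreserving (mk r) (torusMeasure r) volume := by
  have h1 : MeasurePreserving (fun x : ℝ => (x : UnitAddCircle))
      (volume.restrict (Set.Ico (0 : ℝ) 1)) (AddCircle.haarAddCircle) := by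
    have := AddCircle.measurePreserving_mk 1 0
    rw [AddCircle.volume_eq_smul_haarAddCircle] at this
    simp only [ENNReal.ofReal_one, one_smul, zero_add] at this
    rw [Measure.restrict_congr_set (Ico_ae_eq_Ioc (a := (0:ℝ)) (b := 1))]
    exact this
  have h2 := measurePreserving_pi (fun _ : Fin r => volume.restrict (Set.Ico (0 : ℝ) 1))
    (fun _ => AddCircle.haarAddCircle (T := 1)) (fun _ => h1)
  have h3 : torusMeasure r = Measure.pi (fun _ : Fin r => volume.restrict (Set.Ico (0 : ℝ) 1)) := by
    rw [torusMeasure, cube, volume_pi, Measure.restrict_pi_pi]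
  rw [h3]
  exact h2

theorem measurable_sect (r : ℕ) : Measurable (sect r) := by
  refine measurable_pi_lambda _ fun j => ?_
  exact measurable_subtype_coe.comp
    ((AddCircle.measurableEquivIco (1 : ℝ) 0).measurable.comp (measurable_pi_apply j))

theorem sect_mk {r : ℕ} : ∀ᵐ σ ∂(torusMeasure r), sect r (mk r σ) = σ := by
  have hm : MeasurableSet (cube r) := MeasurableSet.univ_pi fun _ => measurableSet_Ico
  rw [torusMeasure]
  filter_upwards [ae_restrict_mem hm] with σ hσ
  funext j
  have : σ j ∈ Set.Ico (0 : ℝ) (0 + 1) := by simpa using hσ j (Set.mem_univ j)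
  simp only [sect, mk]
  exact congrArg Subtype.val
    ((AddCircle.equivIco (1 : ℝ) 0).apply_symm_apply ⟨σ j, this⟩)

theorem mp_sect (r : ℕ) : MeasurePreserving (sect r) volume (torusMeasure r) := by
  refine ⟨measurable_sect r, ?_⟩
  rw [← (mp_mk r).map_eq, Measure.map_map (measurable_sect r) (mp_mk r).measurable]
  rw [Measure.map_congr (g := id) (by filter_upwards [sect_mk] with σ hσ; simpa using hσ)]
  exact Measure.map_id

theorem parseval {r : ℕ} {φ : (Fin r → ℝ) → ℂ} (hφ : MemLp φ 2 (torusMeasure r)) :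
    ∑' m : Fin r → ℤ, (‖∫ σ, char m σ * φ σ ∂(torusMeasure r)‖₊ : ℝ≥0∞) ^ 2 =
      ∫⁻ σ, ‖φ σ‖ₑ ^ 2 ∂(torusMeasure r) := by
  have hF : MemLp (φ ∘ sect r) 2 volume := hφ.comp_measurePreserving (mp_sect r)
  have hs := UnitAddTorus.hasSum_sq_mFourierCoeff (hF.toLp _)
  have hc : ∀ m, UnitAddTorus.mFourierCoeff (hF.toLp _) m
      = ∫ σ, char (-m) σ * φ σ ∂(torusMeasure r) := by
    intro m
    rw [UnitAddTorus.mFourierCoeff]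
    have e1 : ∫ t, UnitAddTorus.mFourier (-m) t • (hF.toLp _) t =
        ∫ t, UnitAddTorus.mFourier (-m) t • (φ ∘ sect r) t ∂(volume) := by
      refine integral_congr_ae ?_
      filter_upwards [hF.coeFn_toLp] with t ht
      rw [ht]
    rw [e1, ← (mp_mk r).map_eq, integral_map (mp_mk r).measurable.aemeasurable]
    · refine integral_congr_ae ?_
      filter_upwards [sect_mk] with σ hσ
      rw [char_eq, Function.comp, hσ, smul_eq_mul]
    · rw [(mp_mk r).map_eq]
      exact (UnitAddTorus.mFourier (-m)).continuous.aestronglyMeasurable.smul hF.1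
  have hn : ∫⁻ σ, ‖φ σ‖ₑ ^ 2 ∂(torusMeasure r) =
      ENNReal.ofReal (∫ t, ‖(hF.toLp _) t‖ ^ 2) := by
    have e1 : ENNReal.ofReal (∫ t, ‖(hF.toLp _) t‖ ^ 2) = ∫⁻ t, ‖(hF.toLp _) t‖ₑ ^ 2 := by
      rw [ofReal_integral_eq_lintegral_ofReal]
      · refine lintegral_congr fun t => ?_
        rw [ENNReal.ofReal_pow (norm_nonneg _), ofReal_norm]
      · exact (Lp.memLp _).integrable_norm_pow (by norm_num)
      · exact Filter.Eventually.of_forall fun t => by positivity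
    rw [e1, ← (mp_sect r).map_eq, lintegral_map' ]
    · refine lintegral_congr_ae ?_
      filter_upwards [hF.coeFn_toLp] with t ht
      rw [ht]; rfl
    · rw [(mp_sect r).map_eq]
      exact hφ.1.enorm.pow_const 2
    · exact (mp_sect r).measurable.aemeasurable
  rw [hn, ← hs.tsum_eq, ENNReal.ofReal_tsum_of_nonneg (fun _ => by positivity) hs.summable,
    ← (Equiv.neg (Fin r → ℤ)).tsum_eq]
  refine tsum_congr fun m => ?_
  rw [hc m, ENNReal.ofReal_pow (norm_nonneg _), ofReal_norm]
  rfl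

end parseval

theorem bessel_all {H : Type*} [NormedAddCommGroup H] [InnerProductSpace ℂ H] [CompleteSpace H]
    {ι : Type*} (v : ι → H) (C : ℝ≥0∞) :
    (∀ x : H, x ∈ (Submodule.span ℂ (Set.range v)).topologicalClosure →
      ∑' i, (‖(inner ℂ x (v i) : ℂ)‖₊ : ℝ≥0∞) ^ 2 ≤ C * (‖x‖₊ : ℝ≥0∞) ^ 2) ↔
    (∀ x : H, ∑' i, (‖(inner ℂ x (v i) : ℂ)‖₊ : ℝ≥0∞) ^ 2 ≤ C * (‖x‖₊ : ℝ≥0∞) ^ 2) := by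
  refine ⟨fun h x => ?_, fun h x _ => h x⟩
  set K := (Submodule.span ℂ (Set.range v)).topologicalClosure with hK
  haveI : CompleteSpace K := (Submodule.isClosed_topologicalClosure _).completeSpace_coe
  have hv : ∀ i, v i ∈ K := fun i =>
    Submodule.le_topologicalClosure _ (Submodule.subset_span ⟨i, rfl⟩)
  have h1 := h (K.starProjection x) (K.starProjection_apply_mem x)
  have h2 : ∀ i, (inner ℂ (K.starProjection x) (v i) : ℂ) = inner ℂ x (v i) := by
    intro i
    rw [K.inner_starProjection_left_eq_right, K.starProjection_eq_self_iff.2 (hv i)]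
  simp only [h2] at h1
  refine h1.trans ?_
  gcongr
  exact K.norm_starProjection_apply_le x

theorem inner_f {r : ℕ} {H : Type} [NormedAddCommGroup H] [InnerProductSpace ℂ H]
    [CompleteSpace H] (h g f : Lp H 2 (torusMeasure r)) (m : Fin r → ℤ)
    (hf : ⇑f =ᵐ[torusMeasure r] fun σ => char m σ • g σ) :
    (inner ℂ h f : ℂ) = ∫ σ, char m σ * inner ℂ (h σ) (g σ) ∂(torusMeasure r) := by
  rw [L2.inner_def]
  refine integral_congr_ae ?_
  filter_upwards [hf] with σ hσ
  rw [hσ, inner_smul_right]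

theorem key {r : ℕ} {H : Type} [NormedAddCommGroup H] [InnerProductSpace ℂ H]
    [CompleteSpace H] {I : Type} [Countable I]
    (g : I → Lp H 2 (torusMeasure r))
    (f : I × (Fin r → ℤ) → Lp H 2 (torusMeasure r))
    (hf : ∀ (i : I) (m : Fin r → ℤ),
      ⇑(f (i, m)) =ᵐ[torusMeasure r] fun σ => char m σ • ⇑(g i) σ)
    (h : Lp H 2 (torusMeasure r))
    (hm : ∀ i, MemLp (fun σ => (inner ℂ (h σ) (g i σ) : ℂ)) 2 (torusMeasure r)) :
    ∑' p : I × (Fin r → ℤ), (‖(inner ℂ h (f p) : ℂ)‖₊ : ℝ≥0∞) ^ 2 =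
      ∫⁻ σ, ∑' i, (‖(inner ℂ (h σ) (g i σ) : ℂ)‖₊ : ℝ≥0∞) ^ 2 ∂(torusMeasure r) := by
  simp_rw [← enorm_eq_nnnorm]
  rw [ENNReal.tsum_prod (f := fun i m => ‖(inner ℂ h (f (i, m)) : ℂ)‖ₑ ^ 2), lintegral_tsum fun i => (hm i).1.enorm.pow_const 2]
  refine tsum_congr fun i => ?_
  simp_rw [fun m => inner_f h (g i) (f (i, m)) m (hf i m)]
  exact parseval (hm i)

/-- **Characterization of Bessel families (transform side).** The family `{f_{i,m}}`,
`f_{i,m}(σ) = e_m(σ) g_i(σ)`, is a Bessel family with constant `B` for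
`S = closed span {f_{i,m}}` iff for a.e. `σ` the family `{g_i(σ)}` is a Bessel family with the
same constant `B` for `J(σ) = closed span {g_i(σ)}`. -/
theorem bessel_characterization (r : ℕ) (hr : 0 < r)
    {H : Type} [NormedAddCommGroup H] [InnerProductSpace ℂ H] [CompleteSpace H]
    [TopologicalSpace.SeparableSpace H]
    {I : Type} [Countable I]
    (g : I → Lp H 2 (torusMeasure r))
    (f : I × (Fin r → ℤ) → Lp H 2 (torusMeasure r))
    (hf : ∀ (i : I) (m : Fin r → ℤ),
      ⇑(f (i, m)) =ᵐ[torusMeasure r] fun σ => char m σ • ⇑(g i) σ)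
    (B : ℝ) (hB : 0 < B) :
    (∀ h : Lp H 2 (torusMeasure r),
      h ∈ (Submodule.span ℂ (Set.range f)).topologicalClosure →
      ∑' p : I × (Fin r → ℤ), (‖(inner ℂ h (f p) : ℂ)‖₊ : ℝ≥0∞) ^ 2 ≤
        ENNReal.ofReal B * (‖h‖₊ : ℝ≥0∞) ^ 2) ↔
    (∀ᵐ σ ∂(torusMeasure r), ∀ x : H,
      x ∈ (Submodule.span ℂ (Set.range fun i => ⇑(g i) σ)).topologicalClosure →
      ∑' i : I, (‖(inner ℂ x (⇑(g i) σ) : ℂ)‖₊ : ℝ≥0∞) ^ 2 ≤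
        ENNReal.ofReal B * (‖x‖₊ : ℝ≥0∞) ^ 2) := by
  have hfin : IsFiniteMeasure (torusMeasure r) := by
    refine ⟨?_⟩
    rw [torusMeasure, Measure.restrict_apply_univ, cube, volume_pi_pi]
    simp
  rw [bessel_all f]
  simp_rw [fun σ => bessel_all (fun i => ⇑(g i) σ) (ENNReal.ofReal B)]
  constructor
  · intro hS
    obtain ⟨D, hDc, hDd⟩ := TopologicalSpace.exists_countable_dense H
    have hx : ∀ x : H, ∀ᵐ σ ∂(torusMeasure r),
        ∑' i : I, (‖(inner ℂ x (⇑(g i) σ) : ℂ)‖₊ : ℝ≥0∞) ^ 2 ≤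
          ENNReal.ofReal B * (‖x‖₊ : ℝ≥0∞) ^ 2 := by
      intro x
      have hmx : ∀ i, MemLp (fun σ => (inner ℂ x (g i σ) : ℂ)) 2 (torusMeasure r) :=
        fun i => (Lp.memLp (g i)).const_inner x
      refine ae_le_of_forall_setLIntegral_le_of_sigmaFinite₀
        (AEMeasurable.ennreal_tsum fun i => (hmx i).1.enorm.pow_const 2) ?_
      intro s hs hμs
      set h : Lp H 2 (torusMeasure r) := indicatorConstLp 2 hs hμs.ne x with hh
      have hc : ⇑h =ᵐ[torusMeasure r] s.indicator fun _ => x := indicatorConstLp_coeFn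
      have hin : ∀ i, (fun σ => (inner ℂ (h σ) (g i σ) : ℂ)) =ᵐ[torusMeasure r]
          s.indicator fun σ => (inner ℂ x (g i σ) : ℂ) := by
        intro i
        filter_upwards [hc] with σ hσ
        rw [hσ]
        by_cases hσs : σ ∈ s <;> simp [hσs]
      have hk := key g f hf h fun i => ((hmx i).indicator hs).ae_eq (hin i).symm
      have hb := hS h
      rw [hk, lp_sq] at hb
      rw [← lintegral_indicator hs, ← lintegral_indicator hs]
      have e1 : ∫⁻ σ, ∑' i, (‖(inner ℂ (h σ) (g i σ) : ℂ)‖₊ : ℝ≥0∞) ^ 2 ∂(torusMeasure r) =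
          ∫⁻ σ, s.indicator (fun σ => ∑' i, (‖(inner ℂ x (g i σ) : ℂ)‖₊ : ℝ≥0∞) ^ 2) σ
            ∂(torusMeasure r) := by
        refine lintegral_congr_ae ?_
        filter_upwards [hc] with σ hσ
        rw [hσ]
        by_cases hσs : σ ∈ s <;> simp [hσs]
      have e2 : ENNReal.ofReal B * ∫⁻ σ, ‖h σ‖ₑ ^ 2 ∂(torusMeasure r) =
          ∫⁻ σ, s.indicator (fun _ => ENNReal.ofReal B * (‖x‖₊ : ℝ≥0∞) ^ 2) σ
            ∂(torusMeasure r) := by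
        rw [← lintegral_const_mul' _ _ ENNReal.ofReal_ne_top]
        refine lintegral_congr_ae ?_
        filter_upwards [hc] with σ hσ
        rw [hσ]
        by_cases hσs : σ ∈ s <;> simp [hσs, enorm_eq_nnnorm]
      rw [← e1, ← e2]
      exact hb
    have hall : ∀ᵐ σ ∂(torusMeasure r), ∀ x ∈ D,
        ∑' i : I, (‖(inner ℂ x (⇑(g i) σ) : ℂ)‖₊ : ℝ≥0∞) ^ 2 ≤
          ENNReal.ofReal B * (‖x‖₊ : ℝ≥0∞) ^ 2 :=
      (ae_ball_iff hDc).2 fun x _ => hx x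
    filter_upwards [hall] with σ hσ x
    rw [ENNReal.tsum_eq_iSup_sum]
    refine iSup_le fun t => ?_
    have hcl : IsClosed {x : H | ∑ i ∈ t, (‖(inner ℂ x (⇑(g i) σ) : ℂ)‖₊ : ℝ≥0∞) ^ 2 ≤
        ENNReal.ofReal B * (‖x‖₊ : ℝ≥0∞) ^ 2} := by
      refine isClosed_le ?_ ?_
      · refine continuous_finset_sum _ fun i _ => ?_
        exact (ENNReal.continuous_pow 2).comp (ENNReal.continuous_coe.comp (by fun_prop))
      · exact (ENNReal.continuous_const_mul ENNReal.ofReal_ne_top).comp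
          ((ENNReal.continuous_pow 2).comp (ENNReal.continuous_coe.comp (by fun_prop)))
    have hsub : D ⊆ {x : H | ∑ i ∈ t, (‖(inner ℂ x (⇑(g i) σ) : ℂ)‖₊ : ℝ≥0∞) ^ 2 ≤
        ENNReal.ofReal B * (‖x‖₊ : ℝ≥0∞) ^ 2} :=
      fun y hy => (ENNReal.sum_le_tsum t).trans (hσ y hy)
    exact hcl.closure_subset_iff.2 hsub (hDd x)
  · intro hJ h
    have hle : ∫⁻ σ, ∑' i, (‖(inner ℂ (h σ) (g i σ) : ℂ)‖₊ : ℝ≥0∞) ^ 2 ∂(torusMeasure r) ≤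
        ENNReal.ofReal B * (‖h‖₊ : ℝ≥0∞) ^ 2 := by
      rw [lp_sq, ← lintegral_const_mul' _ _ ENNReal.ofReal_ne_top]
      refine lintegral_mono_ae ?_
      filter_upwards [hJ] with σ hσ
      exact hσ (h σ)
    have hm : ∀ i, MemLp (fun σ => (inner ℂ (h σ) (g i σ) : ℂ)) 2 (torusMeasure r) := by
      intro i
      refine ⟨(Lp.aestronglyMeasurable h).inner (Lp.aestronglyMeasurable (g i)), ?_⟩
      have h2 := eLpNorm_nnreal_pow_eq_lintegral (p := 2)
        (f := fun σ => (inner ℂ (h σ) (g i σ) : ℂ)) (μ := torusMeasure r) (by norm_num)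
      have h3 : ∫⁻ σ, ‖(inner ℂ (h σ) (g i σ) : ℂ)‖ₑ ^ 2 ∂(torusMeasure r) < ∞ := by
        refine lt_of_le_of_lt ((lintegral_mono fun σ => ?_).trans hle)
          (ENNReal.mul_lt_top ENNReal.ofReal_lt_top (by simp))
        exact ENNReal.le_tsum (f := fun i => (‖(inner ℂ (h σ) (g i σ) : ℂ)‖₊ : ℝ≥0∞) ^ 2) i
      by_contra hcon
      have h4 : eLpNorm (fun σ => (inner ℂ (h σ) (g i σ) : ℂ)) 2 (torusMeasure r) = ∞ := by
        simpa using hcon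
      have h5 : (((2 : ℝ≥0) : ℝ≥0∞)) = 2 := by norm_num
      rw [h5, h4] at h2
      simp at h2
      rw [← h2] at h3
      exact lt_irrefl _ h3
    rw [key g f hf h hm]
    exact hle
end
end
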